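/- The axiom scheme spec (∀xφ → φ) is not provable from the set of axiom schemes TMM ∖ {spec, ALLeq}; moreover, even its formula-metavariable-free instance, the hypothesis-free scheme with conclusion ∀x x≡y → x≡y (x, y distinct variable metavariables, no DV conditions), is not provable from TMM ∖ {spec, ALLeq}. -/

import Mathlib

set_option autoImplicit false

/-! ## Megill-style scheme-level formalization of first-order logic -/

/-- Metavariables: variable metavariables `vr i` (standing for x_i) and
formula metavariables `fm i` (standing for φ_i). -/
inductive MV : Type
  | vr (i : ℕ) : MV
  | fm (i : ℕ) : MV
  deriving DecidableEq

/-- Metaformulas over the pure language of equality. -/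
inductive MF : Type
  | phi (i : ℕ) : MF
  | eq (i j : ℕ) : MF
  | imp (a b : MF) : MF
  | not (a : MF) : MF
  | all (i : ℕ) (a : MF) : MF
  deriving DecidableEq

/-- The set of metavariables occurring in a metaformula. -/
def MF.OC : MF → Set MV
  | .phi i => {MV.fm i}
  | .eq i j => {MV.vr i, MV.vr j}
  | .imp a b => a.OC ∪ b.OC
  | .not a => a.OC
  | .all i a => insert (MV.vr i) a.OC

/-- A scheme: finitely many hypotheses, a conclusion, and disjoint-variable
(DV) conditions given as unordered pairs of metavariables. -/
structure Scheme : Type where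
  hyps : Finset MF
  concl : MF
  dv : Set (Sym2 MV)

/-- Metavariables occurring in a scheme (in its hypotheses or conclusion). -/
def Scheme.OC (Φ : Scheme) : Set MV :=
  {m | ∃ h ∈ Φ.hyps, m ∈ h.OC} ∪ Φ.concl.OC

/-- A (type-preserving) substitution: variable metavariables go to variable
metavariables, formula metavariables go to metaformulas; it is the identity
outside a finite set. -/
structure Subst : Type where
  vr : ℕ → ℕ
  fm : ℕ → MF
  finVr : {i : ℕ | vr i ≠ i}.Finite
  finFm : {i : ℕ | fm i ≠ MF.phi i}.Finite

/-- Action of a substitution on a metaformula. -/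
def MF.substMF (σ : Subst) : MF → MF
  | .phi i => σ.fm i
  | .eq i j => .eq (σ.vr i) (σ.vr j)
  | .imp a b => .imp (a.substMF σ) (b.substMF σ)
  | .not a => .not (a.substMF σ)
  | .all i a => .all (σ.vr i) (a.substMF σ)

/-- The set of metavariables occurring in the image of a metavariable. -/
def Subst.appMV (σ : Subst) : MV → Set MV
  | .vr i => {MV.vr (σ.vr i)}
  | .fm i => (σ.fm i).OC

/-- σ is the identity on a given metavariable. -/
def Subst.Fixes (σ : Subst) : MV → Prop
  | .vr i => σ.vr i = i
  | .fm i => σ.fm i = MF.phi i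

/-- A substitution is legitimate on a scheme if it does not violate its
DV conditions. -/
def Subst.Legit (σ : Subst) (Φ : Scheme) : Prop :=
  ∀ m n : MV, s(m, n) ∈ Φ.dv → σ.appMV m ∩ σ.appMV n = ∅

/-- Propagation of DV conditions along a substitution. -/
def Subst.dvMap (σ : Subst) (D : Set (Sym2 MV)) : Set (Sym2 MV) :=
  {q | ∃ m' n' m n : MV, s(m', n') ∈ D ∧ m ∈ σ.appMV m' ∧ n ∈ σ.appMV n' ∧ q = s(m, n)}

/-- Action of a substitution on a scheme. -/
def Scheme.substS (Φ : Scheme) (σ : Subst) : Scheme :=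
  ⟨Φ.hyps.image (MF.substMF σ), Φ.concl.substMF σ, σ.dvMap Φ.dv⟩

/-- `Φ.Inst Ψ` : Ψ is an instance of Φ, i.e. the result of a legitimate
substitution, possibly followed by the addition of DV conditions. -/
def Scheme.Inst (Φ Ψ : Scheme) : Prop :=
  ∃ σ : Subst, σ.Legit Φ ∧ Ψ.hyps = Φ.hyps.image (MF.substMF σ) ∧
    Ψ.concl = Φ.concl.substMF σ ∧ σ.dvMap Φ.dv ⊆ Ψ.dv

/-- Metavariables occurring in a list of metaformulas. -/
def listOC (P : List MF) : Set MV := {m | ∃ f ∈ P, m ∈ f.OC}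

/-- The DV conditions of a proof `P` of the scheme `Φ`: those of `Φ`, plus all
pairs {m, n} where m is a dummy metavariable of `P` and n occurs in `P`. -/
def proofDV (Φ : Scheme) (P : List MF) : Set (Sym2 MV) :=
  Φ.dv ∪ {q | ∃ m n : MV, m ∈ listOC P ∧ m ∉ Φ.OC ∧ n ∈ listOC P ∧ q = s(m, n)}

/-- `P` is a proof of the scheme `Φ` from the set `S` of schemes. -/
def IsProof (S : Set Scheme) (Φ : Scheme) (P : List MF) : Prop :=
  P ≠ [] ∧ P.getLast? = some Φ.concl ∧
  ∀ (k : ℕ) (hk : k < P.length),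
    P.get ⟨k, hk⟩ ∈ Φ.hyps ∨
    ∃ hs : Finset MF,
      (∀ h ∈ hs, ∃ (l : ℕ) (hl : l < k), P.get ⟨l, hl.trans hk⟩ = h) ∧
      ∃ Ξ ∈ S, Ξ.Inst ⟨hs, P.get ⟨k, hk⟩, proofDV Φ P⟩

/-- `S ⊢ Φ` : the scheme `Φ` is provable from the set `S` of schemes. -/
def Provable (S : Set Scheme) (Φ : Scheme) : Prop := ∃ P : List MF, IsProof S Φ P

/-! ## Object level: first-order formulas and semantics -/

/-- First-order formulas over the pure language of equality, with
individual variables v_i. -/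
inductive FM : Type
  | eq (i j : ℕ) : FM
  | imp (a b : FM) : FM
  | not (a : FM) : FM
  | all (i : ℕ) (a : FM) : FM
  deriving DecidableEq

/-- Variables occurring in a first-order formula. -/
def FM.vars : FM → Set ℕ
  | .eq i j => {i, j}
  | .imp a b => a.vars ∪ b.vars
  | .not a => a.vars
  | .all i a => insert i a.vars

/-- An object-substitution: variable metavariables go to individual variables,
formula metavariables go to first-order formulas. -/
structure OSubst : Type where
  vr : ℕ → ℕ
  fm : ℕ → FM

/-- Action of an object-substitution on a metaformula, yielding a first-order
formula (an object-instance). -/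
def MF.osubst (τ : OSubst) : MF → FM
  | .phi i => τ.fm i
  | .eq i j => .eq (τ.vr i) (τ.vr j)
  | .imp a b => .imp (a.osubst τ) (b.osubst τ)
  | .not a => .not (a.osubst τ)
  | .all i a => .all (τ.vr i) (a.osubst τ)

/-- Variables occurring in the image of a metavariable. -/
def OSubst.appVars (τ : OSubst) : MV → Set ℕ
  | .vr i => {τ.vr i}
  | .fm i => (τ.fm i).vars

/-- An object-substitution is legitimate on a scheme if images of DV-paired
metavariables share no variables. -/
def OSubst.Legit (τ : OSubst) (Φ : Scheme) : Prop :=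
  ∀ m n : MV, s(m, n) ∈ Φ.dv → τ.appVars m ∩ τ.appVars n = ∅

/-- Evaluation of a first-order formula in a structure with domain `D`
(equality interpreted as equality) under an assignment `ρ`. -/
def FM.eval {D : Type} (ρ : ℕ → D) : FM → Prop
  | .eq i j => ρ i = ρ j
  | .imp a b => a.eval ρ → b.eval ρ
  | .not a => ¬ a.eval ρ
  | .all i a => ∀ d : D, a.eval (Function.update ρ i d)

/-- Validity of a first-order formula in the structure with domain `D`. -/
def FM.Valid (D : Type) (f : FM) : Prop := ∀ ρ : ℕ → D, f.eval ρ

/-- A scheme is true if for every legitimate object-instance and every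
nonempty domain, the conclusion is valid whenever all hypotheses are. -/
def Scheme.IsTrue (Φ : Scheme) : Prop :=
  ∀ τ : OSubst, τ.Legit Φ →
    ∀ D : Type, Nonempty D →
      (∀ h ∈ Φ.hyps, FM.Valid D (h.osubst τ)) → FM.Valid D (Φ.concl.osubst τ)

/-! ## (i,j)-transforms and supertruth -/

/-- Auxiliary: (i,j)-transform with a flag recording whether we are inside the
scope of a quantifier ∀x_i. -/
def MF.transfAux (i j : ℕ) : MF → Bool → MF
  | .phi k, _ => .phi k
  | .eq a b, ins =>
      .eq (if ins = true ∧ a = j then i else a) (if ins = true ∧ b = j then i else b)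
  | .imp a b, ins => .imp (a.transfAux i j ins) (b.transfAux i j ins)
  | .not a, ins => .not (a.transfAux i j ins)
  | .all k a, ins =>
      .all (if ins = true ∧ k = j then i else k) (a.transfAux i j (ins || decide (k = i)))

/-- The (i,j)-transform of a metaformula: replace every occurrence of x_j
lying within the scope of a quantifier ∀x_i by x_i. -/
def MF.transform (i j : ℕ) (f : MF) : MF := f.transfAux i j false

/-- The (i,j)-transform of a scheme: transform hypotheses and conclusion,
keep the DV conditions. -/
def Scheme.transform (i j : ℕ) (Φ : Scheme) : Scheme :=
  ⟨Φ.hyps.image (MF.transform i j), Φ.concl.transform i j, Φ.dv⟩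

/-- The (i,j)-transform (and the {i,j}-transform) is legitimate on a scheme
if {x_i, x_j} is not among its DV conditions. -/
def Scheme.TLegit (i j : ℕ) (Φ : Scheme) : Prop := s(MV.vr i, MV.vr j) ∉ Φ.dv

/-- A (hypothesis-free) scheme is presupertrue if all the legitimate
(i,j)-transforms of all its instances (including itself) are true. -/
def Scheme.PreST (Φ : Scheme) : Prop :=
  ∀ Ψ : Scheme, (Ψ = Φ ∨ Φ.Inst Ψ) → ∀ i j : ℕ, Ψ.TLegit i j → (Ψ.transform i j).IsTrue

/-- A scheme is supertrue if every instance of it (including itself) satisfies: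
whenever all legitimate (i,j)-transforms of all instances of each of its
hypotheses (taken as hypothesis-free schemes with the inherited DV conditions)
are true, all legitimate (i,j)-transforms of all instances of its conclusion
are true. -/
def Scheme.Supertrue (Φ : Scheme) : Prop :=
  ∀ Ψ : Scheme, (Ψ = Φ ∨ Φ.Inst Ψ) →
    (∀ h ∈ Ψ.hyps, Scheme.PreST ⟨∅, h, Ψ.dv⟩) → Scheme.PreST ⟨∅, Ψ.concl, Ψ.dv⟩

/-- The {i,j}-transform of a metaformula: the composite of the (i,j)-transform
and the (j,i)-transform, the one with smaller first index performed first. -/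
def MF.stransform (i j : ℕ) (f : MF) : MF :=
  if i ≤ j then (f.transform i j).transform j i else (f.transform j i).transform i j

/-- The {i,j}-transform of a scheme. -/
def Scheme.stransform (i j : ℕ) (Φ : Scheme) : Scheme :=
  ⟨Φ.hyps.image (MF.stransform i j), Φ.concl.stransform i j, Φ.dv⟩

/-- A metaformula contains no formula metavariables. -/
def MF.FmFree : MF → Prop
  | .phi _ => False
  | .eq _ _ => True
  | .imp a b => a.FmFree ∧ b.FmFree
  | .not a => a.FmFree
  | .all _ a => a.FmFree

/-- A scheme contains no formula metavariables. -/
def Scheme.FmFree (Φ : Scheme) : Prop := (∀ h ∈ Φ.hyps, h.FmFree) ∧ Φ.concl.FmFree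

/-- A (hypothesis-free) scheme is pre-semisupertrue if all the legitimate
{i,j}-transforms of all its instances (including itself) are true. -/
def Scheme.PreSST (Φ : Scheme) : Prop :=
  ∀ Ψ : Scheme, (Ψ = Φ ∨ Φ.Inst Ψ) → ∀ i j : ℕ, Ψ.TLegit i j → (Ψ.stransform i j).IsTrue

/-- A scheme is semisupertrue if it is true and every formula-metavariable-free
instance of it satisfies: whenever all legitimate {i,j}-transforms of all
instances of each of its hypotheses are true, all legitimate {i,j}-transforms
of all instances of its conclusion are true. -/
def Scheme.Semisupertrue (Φ : Scheme) : Prop :=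
  Φ.IsTrue ∧
  ∀ Ψ : Scheme, (Ψ = Φ ∨ Φ.Inst Ψ) → Ψ.FmFree →
    (∀ h ∈ Ψ.hyps, Scheme.PreSST ⟨∅, h, Ψ.dv⟩) → Scheme.PreSST ⟨∅, Ψ.concl, Ψ.dv⟩

/-- A metaformula is quantifier-free. -/
def MF.QFree : MF → Prop
  | .phi _ => True
  | .eq _ _ => True
  | .imp a b => a.QFree ∧ b.QFree
  | .not a => a.QFree
  | .all _ _ => False

/-- A scheme is quantifier-free. -/
def Scheme.QFree (Φ : Scheme) : Prop := (∀ h ∈ Φ.hyps, h.QFree) ∧ Φ.concl.QFree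

/-! ## The axiom schemes of the system TMM
(x = x_0, y = x_1, z = x_2; φ = φ_0, ψ = φ_1, χ = φ_2, θ = φ_3, τ = φ_4) -/

def ax_mp : Scheme := ⟨{.phi 0, .imp (.phi 0) (.phi 1)}, .phi 1, ∅⟩

def ax_minimp : Scheme :=
  ⟨∅, .imp (.phi 0) (.imp (.imp (.phi 1) (.phi 2))
      (.imp (.imp (.imp (.phi 3) (.phi 1)) (.imp (.phi 2) (.phi 4)))
        (.imp (.phi 1) (.phi 4)))), ∅⟩

def ax_peirce : Scheme := ⟨∅, .imp (.imp (.imp (.phi 0) (.phi 1)) (.phi 0)) (.phi 0), ∅⟩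

def ax_contrap : Scheme :=
  ⟨∅, .imp (.imp (.phi 0) (.not (.phi 1))) (.imp (.phi 1) (.not (.phi 0))), ∅⟩

def ax_notelim : Scheme := ⟨∅, .imp (.not (.phi 0)) (.imp (.phi 0) (.phi 1)), ∅⟩

def ax_gen : Scheme := ⟨{.phi 0}, .all 0 (.phi 0), ∅⟩

def ax_ALLdistr : Scheme :=
  ⟨∅, .imp (.all 0 (.imp (.phi 0) (.phi 1))) (.imp (.all 0 (.phi 0)) (.all 0 (.phi 1))), ∅⟩

def ax_spec : Scheme := ⟨∅, .imp (.all 0 (.phi 0)) (.phi 0), ∅⟩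

def ax_modal5 : Scheme :=
  ⟨∅, .imp (.not (.all 0 (.phi 0))) (.all 0 (.not (.all 0 (.phi 0)))), ∅⟩

def ax_vacGen : Scheme := ⟨∅, .imp (.phi 0) (.all 0 (.phi 0)), {s(MV.vr 0, MV.fm 0)}⟩

def ax_ALLcomm : Scheme :=
  ⟨∅, .imp (.all 0 (.all 1 (.phi 0))) (.all 1 (.all 0 (.phi 0))), ∅⟩

def ax_EQrefl : Scheme := ⟨∅, .eq 0 0, ∅⟩

def ax_EQsymm : Scheme := ⟨∅, .imp (.eq 0 1) (.eq 1 0), ∅⟩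

def ax_EQtrans : Scheme := ⟨∅, .imp (.eq 0 1) (.imp (.eq 1 2) (.eq 0 2)), ∅⟩

def ax_denot : Scheme :=
  ⟨∅, .imp (.eq 0 0) (.not (.all 1 (.not (.eq 1 0)))), {s(MV.vr 0, MV.vr 1)}⟩

def ax_subst : Scheme :=
  ⟨∅, .all 0 (.imp (.eq 0 1) (.imp (.phi 0) (.all 0 (.imp (.eq 0 1) (.phi 0))))),
    {s(MV.vr 0, MV.vr 1), s(MV.vr 1, MV.fm 0)}⟩

def ax_ALLeq : Scheme :=
  ⟨∅, .imp (.all 0 (.eq 0 1)) (.imp (.all 0 (.phi 0)) (.all 1 (.phi 0))), ∅⟩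

def ax_genEq : Scheme :=
  ⟨∅, .imp (.not (.all 0 (.eq 0 1)))
      (.imp (.not (.all 0 (.eq 0 2))) (.imp (.eq 1 2) (.all 0 (.eq 1 2)))), ∅⟩

def ax_modalD : Scheme := ⟨∅, .imp (.all 0 (.not (.phi 0))) (.not (.all 0 (.phi 0))), ∅⟩

def ax_modal4 : Scheme := ⟨∅, .imp (.all 0 (.phi 0)) (.all 0 (.all 0 (.phi 0))), ∅⟩

/-- The system TMM. -/
def TMM : Set Scheme :=
  {ax_mp, ax_minimp, ax_peirce, ax_contrap, ax_notelim, ax_gen, ax_ALLdistr, ax_spec,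
   ax_modal5, ax_vacGen, ax_ALLcomm, ax_EQrefl, ax_EQsymm, ax_EQtrans, ax_denot,
   ax_subst, ax_ALLeq, ax_genEq}

/-- The subsystem T. -/
def Tsys : Set Scheme :=
  {ax_mp, ax_minimp, ax_peirce, ax_contrap, ax_notelim, ax_gen, ax_ALLdistr, ax_vacGen,
   ax_EQrefl, ax_EQsymm, ax_EQtrans, ax_denot}

/-! A nonstandard semantics: object variable `1` is read as `0` inside the scope of `∀ 0`. -/

namespace SpecIndep

open Function

/-- Variable renaming depending on the flag. -/
def rn (b : Bool) (i : ℕ) : ℕ := if b = true ∧ i = 1 then 0 else i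

/-- Evaluation of metaformulas in the two-element domain. -/
def ev (v : ℕ → ℕ) (T : ℕ → Prop) : MF → Bool → (ℕ → Bool) → Prop
  | .phi k, b, ρ => T k ∧ ρ (rn b 0) = ρ (rn b 1)
  | .eq i j, b, ρ => ρ (rn b (v i)) = ρ (rn b (v j))
  | .imp a c, b, ρ => ev v T a b ρ → ev v T c b ρ
  | .not a, b, ρ => ¬ ev v T a b ρ
  | .all i a, b, ρ => ∀ d : Bool, ev v T a (b || decide (v i = 0)) (update ρ (rn b (v i)) d)

/-- Object variables on which a metavariable depends. -/
def supp (v : ℕ → ℕ) (T : ℕ → Prop) : MV → Set ℕ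
  | .vr i => {v i}
  | .fm k => {n | T k ∧ n ≤ 1}

theorem ev_congr (v : ℕ → ℕ) (T : ℕ → Prop) (a : MF) : ∀ (b b' : Bool) (ρ ρ' : ℕ → Bool),
    (b = b' ∨ ∀ m ∈ a.OC, ∀ p ∈ supp v T m, p ≠ 1) →
    (∀ m ∈ a.OC, ∀ p ∈ supp v T m, ρ (rn b p) = ρ' (rn b' p)) →
    (ev v T a b ρ ↔ ev v T a b' ρ') := by
  induction a with
  | phi k =>
    intro b b' ρ ρ' _ h
    simp only [ev]
    by_cases hT : T k
    · have h0 := h (.fm k) (by simp [MF.OC]) 0 (by simp [supp, hT])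
      have h1 := h (.fm k) (by simp [MF.OC]) 1 (by simp [supp, hT])
      rw [h0, h1]
    · simp [hT]
  | eq i j =>
    intro b b' ρ ρ' _ h
    have h0 := h (.vr i) (by simp [MF.OC]) (v i) (by simp [supp])
    have h1 := h (.vr j) (by simp [MF.OC]) (v j) (by simp [supp])
    simp only [ev, h0, h1]
  | imp a c iha ihc =>
    intro b b' ρ ρ' hb h
    simp only [ev]
    rw [iha b b' ρ ρ' (hb.imp id fun H m hm => H m (Or.inl hm)) (fun m hm => h m (Or.inl hm)),
      ihc b b' ρ ρ' (hb.imp id fun H m hm => H m (Or.inr hm)) (fun m hm => h m (Or.inr hm))]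
  | not a iha =>
    intro b b' ρ ρ' hb h
    simp only [ev]
    rw [iha b b' ρ ρ' hb h]
  | all i a iha =>
    intro b b' ρ ρ' hb h
    simp only [ev]
    refine forall_congr' fun d => iha _ _ _ _ ?_ ?_
    · rcases hb with rfl | hb
      · exact Or.inl rfl
      · exact Or.inr fun m hm => hb m (Or.inr hm)
    · intro m hm p hp
      have h1 := h m (Or.inr hm) p hp
      rcases hb with rfl | hb
      · revert h1
        simp only [rn, update_apply]
        cases b <;> by_cases hi : v i = 0 <;> by_cases hp1 : p = 1 <;> grind
      · have h2 := hb m (Or.inr hm) p hp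
        have h3 := hb (.vr i) (Or.inl rfl) (v i) rfl
        simp only [rn, update_apply, h2, h3, and_false, if_false] at h1 ⊢
        grind

/-- Validity. -/
def Val (v : ℕ → ℕ) (T : ℕ → Prop) (a : MF) : Prop := ∀ b ρ, ev v T a b ρ

/-- Compatibility of DV conditions with the semantics. -/
def Good (v : ℕ → ℕ) (T : ℕ → Prop) (Q : Set (Sym2 MV)) : Prop :=
  ∀ m n, s(m, n) ∈ Q → m ≠ n → ∀ p ∈ supp v T m, ∀ q ∈ supp v T n, p ≠ q ∧ ¬ (p ≤ 1 ∧ q ≤ 1)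

theorem rn_or (b : Bool) (x : ℕ) : rn (b || decide (x = 0)) x = rn b x := by
  unfold rn; cases b <;> by_cases h : x = 0 <;> simp [h]

/-- What the DV conditions of an axiom scheme give about an instance. -/
theorem dv_use {v : ℕ → ℕ} {T : ℕ → Prop} {Q : Set (Sym2 MV)} (hQ : Good v T Q)
    {σ : Subst} {Ξ : Scheme} (hl : σ.Legit Ξ) (hd : σ.dvMap Ξ.dv ⊆ Q) {m n : MV}
    (hmn : s(m, n) ∈ Ξ.dv) :
    ∀ m' ∈ σ.appMV m, ∀ n' ∈ σ.appMV n, ∀ p ∈ supp v T m', ∀ q ∈ supp v T n',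
      p ≠ q ∧ ¬ (p ≤ 1 ∧ q ≤ 1) := by
  intro m' hm' n' hn'
  refine hQ m' n' (hd ⟨m, n, m', n', hmn, hm', hn', rfl⟩) ?_
  rintro rfl
  have := hl m n hmn
  exact (this ▸ (⟨hm', hn'⟩ : m' ∈ σ.appMV m ∩ σ.appMV n) : m' ∈ (∅ : Set MV))

theorem sound {v : ℕ → ℕ} {T : ℕ → Prop} {Q : Set (Sym2 MV)} (hQ : Good v T Q)
    {Ξ : Scheme} (hΞ : Ξ ∈ TMM \ {ax_spec, ax_ALLeq}) {hs : Finset MF} {c : MF}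
    (hI : Ξ.Inst ⟨hs, c, Q⟩) (hv : ∀ h ∈ hs, Val v T h) : Val v T c := by
  obtain ⟨σ, hl, hh, hc, hd⟩ := hI
  simp only at hh hc hd
  subst hh hc
  obtain ⟨hΞ, hne⟩ := hΞ
  simp only [Set.mem_insert_iff, Set.mem_singleton_iff, not_or] at hne
  simp only [TMM, Set.mem_insert_iff, Set.mem_singleton_iff] at hΞ
  have hdv := fun m n => dv_use hQ hl hd (m := m) (n := n)
  rcases hΞ with rfl | rfl | rfl | rfl | rfl | rfl | rfl | rfl | rfl | rfl | rfl | rfl | rfl |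
    rfl | rfl | rfl | rfl | rfl
  · -- mp
    intro b ρ
    have h1 := hv (σ.fm 0) (by simp [ax_mp, MF.substMF]) b ρ
    have h2 := hv (.imp (σ.fm 0) (σ.fm 1)) (by simp [ax_mp, MF.substMF]) b ρ
    exact h2 h1
  · intro b ρ
    simp only [ax_minimp, MF.substMF, ev]; tauto
  · intro b ρ
    simp only [ax_peirce, MF.substMF, ev]; tauto
  · intro b ρ
    simp only [ax_contrap, MF.substMF, ev]; tauto
  · intro b ρ
    simp only [ax_notelim, MF.substMF, ev]; tauto
  · -- gen
    intro b ρ d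
    exact hv (σ.fm 0) (by simp [ax_gen, MF.substMF]) _ _
  · intro b ρ
    simp only [ax_ALLdistr, MF.substMF, ev]
    exact fun h1 h2 d => h1 d (h2 d)
  · exact absurd rfl hne.1
  · -- modal5
    intro b ρ
    simp only [ax_modal5, MF.substMF, ev, rn_or, update_idem, Bool.or_assoc, Bool.or_self]
    exact fun h _ => h
  · -- vacGen
    intro b ρ
    have H := hdv (.vr 0) (.fm 0) (by simp [ax_vacGen]) (.vr (σ.vr 0)) rfl
    simp only [ax_vacGen, MF.substMF, ev]
    intro h d
    refine (ev_congr v T (σ.fm 0) b _ ρ _ ?_ ?_).1 h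
    · by_cases h0 : v (σ.vr 0) = 0
      · right
        intro m hm p hp
        have := H m hm (v (σ.vr 0)) rfl p hp
        omega
      · left; simp [h0]
    · intro m hm p hp
      have := H m hm (v (σ.vr 0)) rfl p hp
      simp only [rn, update_apply]
      cases b <;> by_cases hi : v (σ.vr 0) = 0 <;> by_cases hp1 : p = 1 <;> grind
  · -- ALLcomm
    intro b ρ
    simp only [ax_ALLcomm, MF.substMF, ev]
    generalize v (σ.vr 0) = x
    generalize v (σ.vr 1) = y
    intro h d e
    by_cases hxy : x = y
    · subst hxy; exact h d e
    have hb : ((b || decide (x = 0)) || decide (y = 0)) =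
        ((b || decide (y = 0)) || decide (x = 0)) := by
      rw [Bool.or_assoc, Bool.or_assoc, Bool.or_comm (decide (x = 0))]
    by_cases hle : x ≤ 1 ∧ y ≤ 1
    · refine (ev_congr v T (σ.fm 0) _ _ _ _ (Or.inl hb) ?_).1 (h e e)
      intro m hm p hp
      obtain ⟨rfl, rfl⟩ | ⟨rfl, rfl⟩ : (x = 0 ∧ y = 1) ∨ (x = 1 ∧ y = 0) := by omega
      all_goals
        cases b <;> by_cases hp0 : p = 0 <;> by_cases hp1 : p = 1 <;>
          simp [rn, update_apply, hp0, hp1]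
    · refine (ev_congr v T (σ.fm 0) _ _ _ _ (Or.inl hb) ?_).1 (h e d)
      intro m hm p hp
      have hy : rn (b || decide (x = 0)) y = rn b y := by
        unfold rn; cases b <;> by_cases h0 : x = 0 <;> simp [h0]; omega
      have hx : rn (b || decide (y = 0)) x = rn b x := by
        unfold rn; cases b <;> by_cases h0 : y = 0 <;> simp [h0]; omega
      have hne : rn b x ≠ rn b y := by
        unfold rn; split_ifs <;> omega
      rw [hy, hx, hb, update_comm hne]
  · intro b ρ
    simp [ax_EQrefl, MF.substMF, ev]
  · intro b ρ
    simp only [ax_EQsymm, MF.substMF, ev]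
    exact fun h => h.symm
  · intro b ρ
    simp only [ax_EQtrans, MF.substMF, ev]
    exact fun hxy hyz => hxy.trans hyz
  · -- denot
    intro b ρ
    have H := hdv (.vr 0) (.vr 1) (by simp [ax_denot]) _ rfl _ rfl _ rfl _ rfl
    simp only [ax_denot, MF.substMF, ev]
    revert H
    generalize v (σ.vr 0) = x
    generalize v (σ.vr 1) = y
    intro H _ h
    apply h (ρ (rn b x))
    simp only [rn, update_apply]
    cases b <;> by_cases hi : y = 0 <;> by_cases hp1 : x = 1 <;> grind
  · -- subst
    intro b ρ
    have H := hdv (.vr 0) (.vr 1) (by simp [ax_subst]) _ rfl _ rfl _ rfl _ rfl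
    simp only [ax_subst, MF.substMF, ev]
    intro d
    generalize update ρ (rn b (v (σ.vr 0))) d = ρ1
    simp only [Bool.or_assoc, Bool.or_self]
    generalize (b || decide (v (σ.vr 0) = 0)) = b1
    revert H
    generalize v (σ.vr 0) = x
    generalize v (σ.vr 1) = y
    intro H h1 h2 e h3
    have hne : rn b1 y ≠ rn b1 x := by
      unfold rn; split_ifs <;> omega
    rw [update_self, update_of_ne hne, ← h1] at h3
    rwa [h3, update_eq_self]
  · exact absurd rfl hne.2
  · -- genEq
    intro b ρ
    simp only [ax_genEq, MF.substMF, ev]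
    generalize v (σ.vr 0) = x
    generalize v (σ.vr 1) = y
    generalize v (σ.vr 2) = z
    intro h1 h2 h3 d
    have hy : rn (b || decide (x = 0)) y ≠ rn b x := by
      intro h; apply h1; intro d; rw [rn_or, h]
    have hz : rn (b || decide (x = 0)) z ≠ rn b x := by
      intro h; apply h2; intro d; rw [rn_or, h]
    rw [update_of_ne hy, update_of_ne hz]
    revert h3 hy hz
    unfold rn
    cases b <;> by_cases hx : x = 0 <;> by_cases hy : y = 1 <;> by_cases hz : z = 1 <;> grind

theorem proof_sound {v : ℕ → ℕ} {T : ℕ → Prop} {Φ : Scheme} (hh : Φ.hyps = ∅)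
    (hQ : ∀ P, Good v T (proofDV Φ P)) (hp : Provable (TMM \ {ax_spec, ax_ALLeq}) Φ) :
    Val v T Φ.concl := by
  obtain ⟨P, hne, hlast, hP⟩ := hp
  have key : ∀ (k : ℕ) (hk : k < P.length), Val v T (P.get ⟨k, hk⟩) := by
    intro k
    induction k using Nat.strong_induction_on with
    | _ k ih =>
      intro hk
      rcases hP k hk with h | ⟨hs, h1, Ξ, hΞ, hI⟩
      · simp [hh] at h
      · refine sound (hQ P) hΞ hI fun h hm => ?_
        obtain ⟨l, hl, rfl⟩ := h1 h hm
        exact ih l hl _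
  have hmem := List.mem_of_getLast? hlast
  obtain ⟨⟨k, hk⟩, hk'⟩ := List.mem_iff_get.1 hmem
  exact hk' ▸ key k hk

/-- Symmetric reduction: it suffices to consider a dummy in first position. -/
theorem good_of {v : ℕ → ℕ} {T : ℕ → Prop} {Φ : Scheme} (hdv : Φ.dv = ∅)
    (H : ∀ m n, m ∉ Φ.OC → m ≠ n → ∀ p ∈ supp v T m, ∀ q ∈ supp v T n,
      p ≠ q ∧ ¬ (p ≤ 1 ∧ q ≤ 1)) (P : List MF) : Good v T (proofDV Φ P) := by
  intro m n hmn hne p hp q hq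
  simp only [proofDV, hdv, Set.empty_union, Set.mem_ofPred_eq] at hmn
  obtain ⟨m', n', _, hm', _, he⟩ := hmn
  rcases Sym2.eq_iff.1 he with ⟨rfl, rfl⟩ | ⟨rfl, rfl⟩
  · exact H _ _ hm' hne p hp q hq
  · have := H _ _ hm' hne.symm q hq p hp
    exact ⟨this.1.symm, fun h => this.2 h.symm⟩

end SpecIndep

open SpecIndep in
/-- The axiom scheme spec is not provable from TMM ∖ {spec, ALLeq}; moreover,
even its formula-metavariable-free instance ∀x x≡y → x≡y is not provable
from TMM ∖ {spec, ALLeq}. -/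
theorem spec_independent :
    ¬ Provable (TMM \ {ax_spec, ax_ALLeq}) ax_spec ∧
    ¬ Provable (TMM \ {ax_spec, ax_ALLeq})
        ⟨∅, .imp (.all 0 (.eq 0 1)) (.eq 0 1), ∅⟩ := by
  constructor
  · intro hp
    have := proof_sound (v := fun i => if i = 0 then 0 else i + 1) (T := fun k => k = 0) rfl
      (good_of rfl ?_) hp false (fun i => decide (i = 0))
    · simp [ax_spec, ev, rn] at this
    · intro m n hm hne p hp q hq
      rcases m with i | i <;> rcases n with j | j <;>
        simp [Scheme.OC, ax_spec, MF.OC, supp] at hm hne hp hq <;> grind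
  · intro hp
    have := proof_sound (v := id) (T := fun _ => False) rfl
      (good_of rfl ?_) hp false (fun i => decide (i = 0))
    · simp [ev, rn] at this
    · intro m n hm hne p hp q hq
      rcases m with i | i <;> rcases n with j | j <;>
        simp [Scheme.OC, MF.OC, supp] at hm hne hp hq <;> grind
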